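/- Let 0 < q ≤ p ≤ 2, let X be a Banach space, let τ : D → D be injective, and let f = Σ_J x_J h_J be a finitely supported dyadic H^q_X atom: there is I ∈ D with supp 𝕊(f) ⊆ I and 𝕊(f) ≤ |I|^{−1/q} everywhere. Then ‖(T_{τ,q} ⊗ Id_X)(f)‖_{H^q_X} ≤ C₁^{1/q − 1/p} · ‖T_{τ,p} ⊗ Id_X‖_p (inequality in [0,∞]). -/

import Mathlib

open MeasureTheory Set
open scoped ENNReal NNReal Classical

noncomputable section

/-- A dyadic subinterval of `[0,1)`: the half-open interval
`[k/2^n, (k+1)/2^n)` with `k < 2^n`. -/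
structure DyadicI where
  n : ℕ
  k : ℕ
  hk : k < 2 ^ n

instance : Nonempty DyadicI := ⟨⟨0, 0, by norm_num⟩⟩

namespace DyadicI

/-- The length `|I| = 2^{-n}` of a dyadic interval. -/
def len (I : DyadicI) : ℝ := (2 : ℝ) ^ (-(I.n : ℤ))

/-- The left endpoint `k 2^{-n}` of a dyadic interval. -/
def lep (I : DyadicI) : ℝ := (I.k : ℝ) * I.len

/-- The underlying point set `[k/2^n, (k+1)/2^n)` of a dyadic interval. -/
def toSet (I : DyadicI) : Set ℝ := Set.Ico I.lep (I.lep + I.len)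

/-- The `L^∞`-normalized Haar function `h_I`: `1` on the left half of `I`,
`-1` on the right half of `I`, `0` off `I`. -/
def haar (I : DyadicI) (t : ℝ) : ℝ :=
  if t ∈ Set.Ico I.lep (I.lep + I.len / 2) then 1
  else if t ∈ Set.Ico (I.lep + I.len / 2) (I.lep + I.len) then -1
  else 0

end DyadicI

open DyadicI

section Defs

variable {X : Type*} [NormedAddCommGroup X] [NormedSpace ℝ X]

/-- The square function `𝕊(f)` of the `X`-valued Haar expansion `f = ∑_{I ∈ s} x_I h_I`:
`𝕊(f)(t) = (E_ε ‖∑_I ε_I x_I h_I(t)‖²)^{1/2}`, the average being taken over all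
choices of signs `ε_I ∈ {±1}`, `I ∈ s`. -/
def sqFn (s : Finset DyadicI) (x : DyadicI → X) (t : ℝ) : ℝ :=
  Real.sqrt ((∑ ε : {I // I ∈ s} → Bool,
    ‖∑ I ∈ s.attach, ((if ε I then (1 : ℝ) else -1) * haar I.1 t) • x I.1‖ ^ 2) /
      2 ^ s.card)

/-- The `H^p_X` (quasi-)norm of `f = ∑_{I ∈ s} x_I h_I`:
`‖f‖ = (∫₀¹ 𝕊(f)(t)^p dt)^{1/p}`. -/
def HpNormV (p : ℝ) (s : Finset DyadicI) (x : DyadicI → X) : ℝ :=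
  (∫ t in Set.Icc (0 : ℝ) 1, sqFn s x t ^ p) ^ (1 / p)

/-- The coefficients of `(T_{τ,p} ⊗ Id_X)(f)` for `f = ∑_{I ∈ s} x_I h_I`, namely
`(T_{τ,p} ⊗ Id_X)(f) = ∑_{I ∈ s} (|I|/|τ(I)|)^{1/p} x_I h_{τ(I)}`, as a family of
coefficients indexed by the Haar support `τ(s)`. -/
def rearrCoef (τ : DyadicI → DyadicI) (p : ℝ) (s : Finset DyadicI) (x : DyadicI → X) :
    DyadicI → X :=
  fun J => ∑ I ∈ s, if τ I = J then ((len I / len (τ I)) ^ (1 / p)) • x I else 0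

/-- The scalar dyadic square function `S(f) = (∑_I a_I² 1_I)^{1/2}`
of `f = ∑_{I ∈ s} a_I h_I`. -/
def sqFnS (s : Finset DyadicI) (a : DyadicI → ℝ) (t : ℝ) : ℝ :=
  Real.sqrt (∑ I ∈ s, a I ^ 2 * Set.indicator (toSet I) (fun _ => (1 : ℝ)) t)

/-- The scalar dyadic `H^p` (quasi-)norm `‖f‖_{H^p} = ‖S(f)‖_{L^p[0,1]}`. -/
def HpNormS (p : ℝ) (s : Finset DyadicI) (a : DyadicI → ℝ) : ℝ :=
  (∫ t in Set.Icc (0 : ℝ) 1, sqFnS s a t ^ p) ^ (1 / p)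

/-- The coefficients of the scalar rearrangement operator `T_{τ,p}` applied to
`f = ∑_{I ∈ s} a_I h_I`; `T_{τ,p}` is determined by
`T_{τ,p}(h_I/|I|^{1/p}) = h_{τ(I)}/|τ(I)|^{1/p}`. -/
def rearrCoefS (τ : DyadicI → DyadicI) (p : ℝ) (s : Finset DyadicI) (a : DyadicI → ℝ) :
    DyadicI → ℝ :=
  fun J => ∑ I ∈ s, if τ I = J then ((len I / len (τ I)) ^ (1 / p)) * a I else 0

/-- The operator norm `‖T_{τ,p} ⊗ Id_X : H^p_X → H^p_X‖ ∈ [0,∞]`, computed as the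
supremum over finitely supported `f` in the unit ball of `H^p_X`. -/
def hpOpNorm (τ : DyadicI → DyadicI) (p : ℝ) (X : Type*) [NormedAddCommGroup X]
    [NormedSpace ℝ X] : ℝ≥0∞ :=
  ⨆ (s : Finset DyadicI) (x : DyadicI → X) (_ : HpNormV p s x ≤ 1),
    ENNReal.ofReal (HpNormV p (s.image τ) (rearrCoef τ p s x))

/-- The scalar operator norm `‖T_{τ,p} : H^p → H^p‖ ∈ [0,∞]`. -/
def hpOpNormS (τ : DyadicI → DyadicI) (p : ℝ) : ℝ≥0∞ :=
  ⨆ (s : Finset DyadicI) (a : DyadicI → ℝ) (_ : HpNormS p s a ≤ 1),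
    ENNReal.ofReal (HpNormS p (s.image τ) (rearrCoefS τ p s a))

/-- For `H = τ(L)` (so that `σ(J) = I` for `J = τ(I)`, `I ∈ L`), the maximal function
`μ_H(t) = sup_{J ∈ H} (|σ(J)|/|J|) 1_J(t) = sup_{I ∈ L} (|I|/|τ(I)|) 1_{τ(I)}(t)`,
as an `[0,∞]`-valued function. -/
def muSet (τ : DyadicI → DyadicI) (L : Set DyadicI) (t : ℝ) : ℝ≥0∞ :=
  ⨆ (I : DyadicI) (_ : I ∈ L),
    ENNReal.ofReal (len I / len (τ I) * Set.indicator (toSet (τ I)) (fun _ => (1 : ℝ)) t)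

/-- For `H = τ(L)` with `L` finite, the (real-valued) maximal function
`μ_H(t) = max_{I ∈ L} (|I|/|τ(I)|) 1_{τ(I)}(t)`. -/
def muFin (τ : DyadicI → DyadicI) (L : Finset DyadicI) (t : ℝ) : ℝ :=
  ((L.sup fun I =>
    Real.toNNReal (len I / len (τ I) * Set.indicator (toSet (τ I)) (fun _ => (1 : ℝ)) t) : ℝ≥0) : ℝ)

/-- The point set `L* = ⋃_{I ∈ L} I` covered by a collection of dyadic intervals. -/
def pointSet (L : Set DyadicI) : Set ℝ := ⋃ I ∈ L, toSet I

/-- The constant `C₁ = sup_{H ⊆ τ(D), H ≠ ∅} (1/|σ(H)*|) ∫₀¹ μ_H(t) dt`, where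
nonempty collections `H ⊆ τ(D)` are parametrized as `H = τ(L)` for nonempty `L ⊆ D`,
so that `σ(H)* = L*`. -/
def Cone (τ : DyadicI → DyadicI) : ℝ≥0∞ :=
  ⨆ (L : Set DyadicI) (_ : L.Nonempty),
    (∫⁻ t in Set.Icc (0 : ℝ) 1, muSet τ L t) / volume (pointSet L)

/-- The square of the dyadic BMO norm of `g = ∑_{J ∈ s} a_J h_J`:
`‖g‖_{BMO}² = sup_{I ∈ D} (1/|I|) ∑_{J ⊆ I} a_J² |J|`. -/
def bmoSq (s : Finset DyadicI) (a : DyadicI → ℝ) : ℝ≥0∞ :=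
  ⨆ I : DyadicI, ENNReal.ofReal
    ((∑ J ∈ s.filter fun J => toSet J ⊆ toSet I, a J ^ 2 * len J) / len I)

/-- The coefficients of `S_σ(g)` for `g = ∑_{J ∈ s} a_J h_J`, where `σ = τ⁻¹` on `τ(D)`:
`S_σ(h_J) = h_{σ(J)}` for `J ∈ τ(D)` and `S_σ(h_J) = 0` otherwise, so that the
coefficient of `h_K` in `S_σ(g)` is `a_{τ(K)}` if `τ(K) ∈ s`, and `0` otherwise. -/
def sSigmaCoef (τ : DyadicI → DyadicI) (s : Finset DyadicI) (a : DyadicI → ℝ) :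
    DyadicI → ℝ :=
  fun K => if τ K ∈ s then a (τ K) else 0

/-- The Haar support of `S_σ(g)` for `g` with Haar support `s`:
`σ(s ∩ τ(D))`, i.e. the preimage under `τ` of `s`. -/
def sSigmaSupp (τ : DyadicI → DyadicI) (s : Finset DyadicI) : Finset DyadicI :=
  (s.filter fun J => J ∈ Set.range τ).image (Function.invFun τ)

/-- The operator norm `‖S_σ‖_{BMO} ∈ [0,∞]` of `S_σ` with respect to the dyadic BMO
norm, computed over finitely supported Haar expansions. -/
def bmoOpNorm (τ : DyadicI → DyadicI) : ℝ≥0∞ :=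
  ⨆ (s : Finset DyadicI) (a : DyadicI → ℝ) (_ : bmoSq s a ≤ 1),
    (bmoSq (sSigmaSupp τ s) (sSigmaCoef τ s a)) ^ (1 / 2 : ℝ)

/-- The Carleson constant `⟦C⟧ = sup_{I ∈ C} (1/|I|) ∑_{J ∈ C, J ⊆ I} |J| ∈ [0,∞]`
of a collection of dyadic intervals. -/
def carleson (C : Set DyadicI) : ℝ≥0∞ :=
  ⨆ (I : DyadicI) (_ : I ∈ C),
    (∑' J : {J : DyadicI // J ∈ C ∧ toSet J ⊆ toSet I}, ENNReal.ofReal (len J.1)) /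
      ENNReal.ofReal (len I)

/-- The `L^p_X = L^p([0,1]; X)` (Bochner) norm of `f = ∑_{I ∈ s} x_I h_I`. -/
def LpNormV (p : ℝ) (s : Finset DyadicI) (x : DyadicI → X) : ℝ :=
  (∫ t in Set.Icc (0 : ℝ) 1, ‖∑ I ∈ s, haar I t • x I‖ ^ p) ^ (1 / p)

/-- The operator norm `‖T_{τ,p} ⊗ Id_X : L^p_X → L^p_X‖ ∈ [0,∞]`, computed over
finitely supported Haar expansions. -/
def lpOpNorm (τ : DyadicI → DyadicI) (p : ℝ) (X : Type*) [NormedAddCommGroup X]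
    [NormedSpace ℝ X] : ℝ≥0∞ :=
  ⨆ (s : Finset DyadicI) (x : DyadicI → X) (_ : LpNormV p s x ≤ 1),
    ENNReal.ofReal (LpNormV p (s.image τ) (rearrCoef τ p s x))

/-- The operator norm `‖T_{τ,p}^{-1} ⊗ Id_X‖ ∈ [0,∞]` on the span of
`{h_J : J ∈ τ(D)}` with the `L^p_X` norm: the map determined by
`x h_{τ(I)}/|τ(I)|^{1/p} ↦ x h_I/|I|^{1/p}`, i.e. sending
`g = ∑_{I ∈ L} x_I h_{τ(I)}` to `∑_{I ∈ L} (|τ(I)|/|I|)^{1/p} x_I h_I`. -/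
def lpInvOpNorm (τ : DyadicI → DyadicI) (p : ℝ) (X : Type*) [NormedAddCommGroup X]
    [NormedSpace ℝ X] : ℝ≥0∞ :=
  ⨆ (L : Finset DyadicI) (x : DyadicI → X)
    (_ : LpNormV p (L.image τ) (fun J => ∑ I ∈ L, if τ I = J then x I else 0) ≤ 1),
    ENNReal.ofReal (LpNormV p L fun I => ((len (τ I) / len I) ^ (1 / p)) • x I)

/-- The operator norm `‖T_{τ,1}^{-1}‖₁ ∈ [0,∞]` on the span of `{h_J : J ∈ τ(D)}`
with the dyadic `H¹` norm: the map determined by `h_{τ(I)}/|τ(I)| ↦ h_I/|I|`,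
i.e. sending `g = ∑_{I ∈ L} a_I h_{τ(I)}` to `∑_{I ∈ L} (|τ(I)|/|I|) a_I h_I`. -/
def h1InvOpNorm (τ : DyadicI → DyadicI) : ℝ≥0∞ :=
  ⨆ (L : Finset DyadicI) (a : DyadicI → ℝ)
    (_ : HpNormS 1 (L.image τ) (fun J => ∑ I ∈ L, if τ I = J then a I else 0) ≤ 1),
    ENNReal.ofReal (HpNormS 1 L fun I => (len (τ I) / len I) * a I)

/-- The Rademacher average `(E_ε ‖∑_{i<n} ε_i a_i‖^p)^{1/p}` over all choices of
signs `ε_i ∈ {±1}`. -/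
def radAvg (p : ℝ) {Y : Type*} [NormedAddCommGroup Y] [NormedSpace ℝ Y] (n : ℕ)
    (a : Fin n → Y) : ℝ :=
  ((∑ ε : Fin n → Bool, ‖∑ i, (if ε i then (1 : ℝ) else -1) • a i‖ ^ p) / 2 ^ n) ^ (1 / p)

/-- The type-`p` constant `Type_p(Y) ∈ [0,∞]`: the least `C` such that
`(E_ε ‖∑ ε_i a_i‖^p)^{1/p} ≤ C (∑ ‖a_i‖^p)^{1/p}` for all finite families in `Y`. -/
def typeConst (p : ℝ) (Y : Type*) [NormedAddCommGroup Y] [NormedSpace ℝ Y] : ℝ≥0∞ :=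
  sInf {C : ℝ≥0∞ | ∀ (n : ℕ) (a : Fin n → Y),
    ENNReal.ofReal (radAvg p n a) ≤ C * ENNReal.ofReal ((∑ i, ‖a i‖ ^ p) ^ (1 / p))}

/-- The UMD property of a Banach space `E`: for each `1 < r < ∞` the Haar system is
unconditional in `L^r_E`. -/
def IsUMD (E : Type*) [NormedAddCommGroup E] [NormedSpace ℝ E] : Prop :=
  ∀ r : ℝ, 1 < r → ∃ β : ℝ, ∀ (s : Finset DyadicI) (x : DyadicI → E) (ε : DyadicI → ℝ),
    (∀ I, ε I = 1 ∨ ε I = -1) →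
    LpNormV r s (fun I => ε I • x I) ≤ β * LpNormV r s x

/-- `B` is a block in `L` with top `I`: `B ⊆ L`, `I` is the unique maximal interval
of `B`, and `B` is order-convex in `L` between its elements and `I`. -/
def IsBlock (L : Set DyadicI) (B : Set DyadicI) (I : DyadicI) : Prop :=
  B ⊆ L ∧ I ∈ B ∧ (∀ J ∈ B, toSet J ⊆ toSet I) ∧
    ∀ J ∈ B, ∀ K ∈ L, toSet J ⊆ toSet K → toSet K ⊆ toSet I → K ∈ B

/-- `G₁(K | E)`: the maximal dyadic intervals of `E` strictly contained in `K`. -/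
def gen1 (K : DyadicI) (E : Set DyadicI) : Set DyadicI :=
  {J | J ∈ E ∧ toSet J ⊂ toSet K ∧
    ∀ J' ∈ E, toSet J' ⊂ toSet K → toSet J ⊆ toSet J' → J' = J}

end Defs

/-!
By injectivity of `τ`, the coefficients of `T_{τ,q} f` are those of `T_{τ,p} f` multiplied by
`(|σ(J)|/|J|)^{1/q - 1/p}`, and at a point `t` of `J` this factor is at most `μ_H(t)^{1/q - 1/p}`,
where `H` is the Haar support of `T_{τ,p} f`. Hence Kahane's contraction principle gives
`𝕊(T_{τ,q} f) ≤ μ_H^{1/q - 1/p} 𝕊(T_{τ,p} f)` pointwise, and Hölder's inequality yields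
`‖T_{τ,q} f‖_q ≤ (∫ μ_H)^{1/q - 1/p} ‖T_{τ,p} f‖_p`. Since `𝕊(f) ≥ ‖x_J‖` on `J`, every `J` in the
Haar support of an atom lies in its supporting interval `I`, so `∫ μ_H ≤ C₁ |I|`, while the bounds
on the atom give `‖f‖_p ≤ |I|^{1/p - 1/q}`; the powers of `|I|` cancel.
-/

lemma convexOn_finset_sum {𝕜 κ V β : Type*} [Semiring 𝕜] [PartialOrder 𝕜] [AddCommMonoid V]
    [SMul 𝕜 V] [AddCommMonoid β] [PartialOrder β] [IsOrderedAddMonoid β] [Module 𝕜 β] {S : Set V}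
    (hS : Convex 𝕜 S) {t : Finset κ} {f : κ → V → β} (hf : ∀ k ∈ t, ConvexOn 𝕜 S (f k)) :
    ConvexOn 𝕜 S fun v => ∑ k ∈ t, f k v := by
  rw [← Finset.sum_fn]
  exact Finset.sum_induction f (ConvexOn 𝕜 S) (fun _ _ => ConvexOn.add) (convexOn_const 0 hS) hf

section Rademacher

variable {ι E : Type*} [Fintype ι] [SeminormedAddCommGroup E] [NormedSpace ℝ E]

/-- The sign encoded by a Boolean: `true` is `1` and `false` is `-1`, as in `sqFn`. -/
def boolSign (b : Bool) : ℝ := if b then 1 else -1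

lemma abs_boolSign (b : Bool) : |boolSign b| = 1 := by
  cases b <;> simp [boolSign]

lemma boolSign_beq (a b : Bool) : boolSign (a == b) = boolSign a * boolSign b := by
  cases a <;> cases b <;> simp [boolSign]

/-- The signed sum `∑ᵢ εᵢ vᵢ` of a finite family of vectors. -/
def signedSum (v : ι → E) (ε : ι → Bool) : E := ∑ i, boolSign (ε i) • v i

lemma signedSum_const_smul (a : ℝ) (v : ι → E) (ε : ι → Bool) :
    signedSum (fun i => a • v i) ε = a • signedSum v ε := by
  simp only [signedSum, Finset.smul_sum, smul_comm a]

lemma norm_signedSum_le (v : ι → E) (ε : ι → Bool) : ‖signedSum v ε‖ ≤ ∑ i, ‖v i‖ :=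
  norm_sum_le_of_le _ fun i _ => by rw [norm_smul, Real.norm_eq_abs, abs_boolSign, one_mul]

variable [DecidableEq ι]

lemma convexOn_sum_norm_signedSum_smul_pow (v : ι → E) (n : ℕ) :
    ConvexOn ℝ univ fun c : ι → ℝ => ∑ ε : ι → Bool, ‖signedSum (fun i => c i • v i) ε‖ ^ n := by
  have linear_coe (ε : ι → Bool) :
      (fun c : ι → ℝ => signedSum (fun i => c i • v i) ε) =
        Fintype.linearCombination ℝ fun i => boolSign (ε i) • v i := by
    ext c
    simp only [signedSum, Fintype.linearCombination_apply, smul_comm (c _)]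
  refine convexOn_finset_sum convex_univ fun ε _ => ?_
  have norm_convex := (convexOn_univ_norm (E := E)).comp_linearMap
    (Fintype.linearCombination ℝ fun i => boolSign (ε i) • v i)
  rw [← linear_coe] at norm_convex
  exact norm_convex.pow (fun _ _ => norm_nonneg _) n

lemma sum_norm_signedSum_boolSign_smul_pow (v : ι → E) (δ : ι → Bool) (n : ℕ) :
    ∑ ε : ι → Bool, ‖signedSum (fun i => boolSign (δ i) • v i) ε‖ ^ n =
      ∑ ε : ι → Bool, ‖signedSum v ε‖ ^ n := by
  have flip_involutive : Function.Involutive fun (ε : ι → Bool) i => (ε i == δ i) := fun ε => by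
    funext i
    cases hε : ε i <;> cases hδ : δ i <;> simp [hε, hδ]
  refine Fintype.sum_bijective _ flip_involutive.bijective _ _ fun ε => ?_
  simp only [signedSum, boolSign_beq, mul_smul]

/-- A convex function on a cube is largest at a vertex, and at a vertex of `[-M, M]^ι` the
multipliers are a constant times signs, which only permute the choices of `ε`. -/
theorem sum_norm_signedSum_smul_pow_le (v : ι → E) {c : ι → ℝ} {M : ℝ} (hc : ∀ i, |c i| ≤ M)
    (n : ℕ) :
    ∑ ε : ι → Bool, ‖signedSum (fun i => c i • v i) ε‖ ^ n ≤
      |M| ^ n * ∑ ε : ι → Bool, ‖signedSum v ε‖ ^ n := by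
  have c_mem : c ∈ convexHull ℝ (univ.pi fun _ : ι => ({-M, M} : Set ℝ)) := by
    rw [convexHull_pi]
    intro i _
    obtain ⟨hl, hr⟩ := abs_le.1 (hc i)
    rw [convexHull_pair, segment_eq_Icc (hl.trans hr)]
    exact ⟨hl, hr⟩
  obtain ⟨y, hy, hcy⟩ :=
    (convexOn_sum_norm_signedSum_smul_pow v n).exists_ge_of_mem_convexHull (subset_univ _) c_mem
  have y_eq_sign (i : ι) : ∃ b, y i = M * boolSign b := by
    rcases hy i (mem_univ i) with h | h
    · exact ⟨false, by simp [boolSign, h]⟩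
    · exact ⟨true, by simpa [boolSign] using h⟩
  choose δ hδ using y_eq_sign
  refine hcy.trans_eq ?_
  simp only [hδ, mul_smul, signedSum_const_smul, norm_smul, mul_pow, Real.norm_eq_abs,
    ← Finset.mul_sum, sum_norm_signedSum_boolSign_smul_pow]

/-- The Rademacher norm `(E_ε ‖∑ᵢ εᵢ vᵢ‖²)^{1/2}` of a finite family; `𝕊(f)(t)` is the Rademacher
norm of the family `(h_I(t) x_I)_I`. -/
def rademacherNorm (v : ι → E) : ℝ :=
  √((∑ ε : ι → Bool, ‖signedSum v ε‖ ^ 2) / 2 ^ Fintype.card ι)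

lemma rademacherNorm_eq_of_norm_signedSum_eq {v : ι → E} {r : ℝ} (hr : 0 ≤ r)
    (h : ∀ ε, ‖signedSum v ε‖ = r) : rademacherNorm v = r := by
  simp [rademacherNorm, h, hr]

lemma rademacherNorm_const_smul (a : ℝ) (v : ι → E) :
    rademacherNorm (fun i => a • v i) = |a| * rademacherNorm v := by
  simp only [rademacherNorm, signedSum_const_smul, norm_smul, mul_pow, Real.norm_eq_abs, sq_abs,
    ← Finset.mul_sum, mul_div_assoc, Real.sqrt_mul (sq_nonneg a), Real.sqrt_sq_eq_abs]

lemma rademacherNorm_le_sum_norm (v : ι → E) : rademacherNorm v ≤ ∑ i, ‖v i‖ := by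
  have sum_nonneg : 0 ≤ ∑ i, ‖v i‖ := Finset.sum_nonneg fun _ _ => norm_nonneg _
  rw [rademacherNorm, Real.sqrt_le_left sum_nonneg, div_le_iff₀ (by positivity)]
  calc ∑ ε : ι → Bool, ‖signedSum v ε‖ ^ 2
      ≤ ∑ _ε : ι → Bool, (∑ i, ‖v i‖) ^ 2 := by gcongr; exact norm_signedSum_le v _
    _ = (∑ i, ‖v i‖) ^ 2 * 2 ^ Fintype.card ι := by simp [mul_comm]

theorem rademacherNorm_smul_le (v : ι → E) {c : ι → ℝ} {M : ℝ} (hM : 0 ≤ M)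
    (hc : ∀ i, v i ≠ 0 → |c i| ≤ M) :
    rademacherNorm (fun i => c i • v i) ≤ M * rademacherNorm v := by
  have truncate : (fun i => c i • v i) = fun i => (if v i = 0 then 0 else c i) • v i := by
    ext i
    split_ifs with h <;> simp [h]
  have truncate_le (i : ι) : |if v i = 0 then 0 else c i| ≤ M := by
    split_ifs with h
    exacts [by simpa using hM, hc i h]
  rw [truncate, rademacherNorm, rademacherNorm]
  conv_rhs => rw [← Real.sqrt_sq hM, ← Real.sqrt_mul (sq_nonneg M), ← mul_div_assoc]
  gcongr
  simpa only [sq_abs] using sum_norm_signedSum_smul_pow_le v truncate_le 2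

lemma norm_le_rademacherNorm (v : ι → E) (i : ι) : ‖v i‖ ≤ rademacherNorm v := by
  have single_term (ε : ι → Bool) :
      ‖signedSum (fun j => (if j = i then (1 : ℝ) else 0) • v j) ε‖ = ‖v i‖ := by
    simp [signedSum, ite_smul, norm_smul, abs_boolSign]
  rw [← rademacherNorm_eq_of_norm_signedSum_eq (norm_nonneg _) single_term,
    ← one_mul (rademacherNorm v)]
  refine rademacherNorm_smul_le v zero_le_one fun j _ => ?_
  split_ifs <;> simp

end Rademacher

namespace DyadicI

instance : Countable DyadicI := by
  refine Function.Injective.countable (f := fun I : DyadicI => (I.n, I.k)) ?_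
  rintro ⟨n, k, _⟩ ⟨n', k', _⟩ h
  simpa using h

lemma len_pos (I : DyadicI) : 0 < len I := by
  unfold len
  positivity

lemma measurableSet_toSet (I : DyadicI) : MeasurableSet (toSet I) := measurableSet_Ico

lemma volume_toSet (I : DyadicI) : volume (toSet I) = ENNReal.ofReal (len I) := by
  simp [toSet]

lemma toSet_subset_Icc (I : DyadicI) : toSet I ⊆ Icc 0 1 := by
  have lep_nonneg : 0 ≤ lep I := mul_nonneg (Nat.cast_nonneg _) (len_pos I).le
  have right_end_le : lep I + len I ≤ 1 := by
    have k_succ_le : (I.k : ℝ) + 1 ≤ 2 ^ I.n := by exact_mod_cast I.hk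
    calc lep I + len I = (I.k + 1) * len I := by rw [lep, add_one_mul]
      _ ≤ 2 ^ I.n * len I := by gcongr; exact (len_pos I).le
      _ = 1 := by simp [len]
  exact Ico_subset_Icc_self.trans (Icc_subset_Icc lep_nonneg right_end_le)

lemma haar_eq_zero {I : DyadicI} {t : ℝ} (ht : t ∉ toSet I) : haar I t = 0 := by
  have := len_pos I
  simp only [toSet, mem_Ico, not_and, not_lt] at ht
  rw [haar, if_neg, if_neg] <;> simp only [mem_Ico] <;> grind

lemma abs_haar_of_mem {I : DyadicI} {t : ℝ} (ht : t ∈ toSet I) : |haar I t| = 1 := by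
  simp only [toSet, mem_Ico] at ht
  simp only [haar, mem_Ico]
  grind

lemma measurable_haar (I : DyadicI) : Measurable (haar I) :=
  measurable_const.ite measurableSet_Ico (measurable_const.ite measurableSet_Ico measurable_const)

end DyadicI

section MaximalFunction

lemma volume_pointSet_ne_top (L : Set DyadicI) : volume (pointSet L) ≠ ⊤ :=
  measure_ne_top_of_subset (iUnion₂_subset fun I _ => toSet_subset_Icc I) measure_Icc_lt_top.ne

lemma volume_pointSet_ne_zero {L : Set DyadicI} (hL : L.Nonempty) : volume (pointSet L) ≠ 0 := by
  obtain ⟨I, hI⟩ := hL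
  have I_pos : 0 < volume (toSet I) := by
    rw [volume_toSet]
    exact ENNReal.ofReal_pos.2 (len_pos I)
  exact (I_pos.trans_le (measure_mono (subset_biUnion_of_mem hI))).ne'

lemma measurable_muSet (τ : DyadicI → DyadicI) (L : Set DyadicI) : Measurable (muSet τ L) :=
  .biSup L L.to_countable fun I _ =>
    ((measurable_const.indicator (measurableSet_toSet (τ I))).const_mul _).ennreal_ofReal

lemma muSet_coe_finset (τ : DyadicI → DyadicI) (L : Finset DyadicI) (t : ℝ) :
    muSet τ L t = ENNReal.ofReal (muFin τ L t) := by
  rw [muFin, ENNReal.ofReal_coe_nnreal, ENNReal.coe_finset_sup, Finset.sup_eq_iSup]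
  rfl

lemma muFin_nonneg (τ : DyadicI → DyadicI) (L : Finset DyadicI) (t : ℝ) : 0 ≤ muFin τ L t :=
  NNReal.coe_nonneg _

lemma len_div_len_le_muFin (τ : DyadicI → DyadicI) {L : Finset DyadicI} {I : DyadicI}
    (hI : I ∈ L) {t : ℝ} (ht : t ∈ toSet (τ I)) : len I / len (τ I) ≤ muFin τ L t := by
  have le_sup := Finset.le_sup (f := fun I => Real.toNNReal
    (len I / len (τ I) * indicator (toSet (τ I)) (fun _ => (1 : ℝ)) t)) hI
  simp only [indicator_of_mem ht, mul_one] at le_sup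
  exact Real.toNNReal_le_iff_le_coe.1 le_sup

lemma lintegral_muSet_le (τ : DyadicI → DyadicI) (L : Set DyadicI) :
    ∫⁻ t in Icc (0 : ℝ) 1, muSet τ L t ≤ Cone τ * volume (pointSet L) := by
  rcases L.eq_empty_or_nonempty with rfl | hL
  · simp [muSet]
  rw [← ENNReal.div_le_iff (volume_pointSet_ne_zero hL) (volume_pointSet_ne_top L)]
  exact le_iSup₂_of_le (f := fun (L : Set DyadicI) (_ : L.Nonempty) =>
    (∫⁻ t in Icc (0 : ℝ) 1, muSet τ L t) / volume (pointSet L)) L hL le_rfl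

end MaximalFunction

lemma lintegral_rpow_le_of_le_rpow_mul {α : Type*} [MeasurableSpace α] {μ : Measure α}
    {f g h : α → ℝ≥0∞} (hf : AEMeasurable f μ) (hg : AEMeasurable g μ) {p q : ℝ} (hq : 0 < q)
    (hqp : q ≤ p) (hle : ∀ᵐ a ∂μ, h a ≤ f a ^ (1 / q - 1 / p) * g a) :
    (∫⁻ a, h a ^ q ∂μ) ^ (1 / q) ≤
      (∫⁻ a, f a ∂μ) ^ (1 / q - 1 / p) * (∫⁻ a, g a ^ p ∂μ) ^ (1 / p) := by
  have hp : 0 < p := hq.trans_le hqp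
  have exponent_f : (1 / q - 1 / p) * q = 1 - q / p := by field_simp
  have exponent_g : p * (q / p) = q := mul_div_cancel₀ q hp.ne'
  have split_powers :
      ∫⁻ a, h a ^ q ∂μ ≤ ∫⁻ a, f a ^ (1 - q / p) * (g a ^ p) ^ (q / p) ∂μ := by
    refine lintegral_mono_ae (hle.mono fun a ha => (ENNReal.rpow_le_rpow ha hq.le).trans_eq ?_)
    rw [ENNReal.mul_rpow_of_nonneg _ _ hq.le, ← ENNReal.rpow_mul, ← ENNReal.rpow_mul, exponent_f,
      exponent_g]
  have holder := ENNReal.lintegral_mul_norm_pow_le hf (hg.pow_const p)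
    (sub_nonneg.2 ((div_le_one hp).2 hqp)) (div_pos hq hp).le (sub_add_cancel 1 (q / p))
  refine (ENNReal.rpow_le_rpow (split_powers.trans holder) (by positivity)).trans_eq ?_
  rw [ENNReal.mul_rpow_of_nonneg _ _ (by positivity), ← ENNReal.rpow_mul, ← ENNReal.rpow_mul,
    ← exponent_f]
  congr 2 <;> field_simp

section SquareFunction

variable {X : Type*} [NormedAddCommGroup X] [NormedSpace ℝ X]
  {s : Finset DyadicI} {x : DyadicI → X} {t : ℝ}

lemma sqFn_eq_rademacherNorm (s : Finset DyadicI) (x : DyadicI → X) (t : ℝ) :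
    sqFn s x t = rademacherNorm fun I : {I // I ∈ s} => haar I.1 t • x I.1 := by
  simp only [sqFn, rademacherNorm, signedSum, boolSign, mul_smul, Finset.univ_eq_attach,
    Fintype.card_coe]

lemma sqFn_nonneg (s : Finset DyadicI) (x : DyadicI → X) (t : ℝ) : 0 ≤ sqFn s x t :=
  Real.sqrt_nonneg _

lemma measurable_sqFn (s : Finset DyadicI) (x : DyadicI → X) : Measurable (sqFn s x) := by
  refine ((Finset.measurable_sum _ fun ε _ => ?_).div_const _).sqrt
  have signed_sum_measurable : StronglyMeasurable fun t =>
      ∑ I ∈ s.attach, ((if ε I then (1 : ℝ) else -1) * haar I.1 t) • x I.1 :=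
    Finset.stronglyMeasurable_fun_sum _ fun I _ =>
      ((measurable_haar I.1).const_mul _).stronglyMeasurable.smul_const _
  exact signed_sum_measurable.norm.measurable.pow_const 2

lemma sqFn_const_smul (a : ℝ) (s : Finset DyadicI) (x : DyadicI → X) (t : ℝ) :
    sqFn s (fun I => a • x I) t = |a| * sqFn s x t := by
  simp only [sqFn_eq_rademacherNorm, smul_comm (haar _ t) a, rademacherNorm_const_smul]

lemma sqFn_smul_le {c : DyadicI → ℝ} {M : ℝ} (hM : 0 ≤ M)
    (hc : ∀ I ∈ s, t ∈ toSet I → x I ≠ 0 → |c I| ≤ M) :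
    sqFn s (fun I => c I • x I) t ≤ M * sqFn s x t := by
  simp only [sqFn_eq_rademacherNorm, smul_comm (haar _ t)]
  refine rademacherNorm_smul_le _ hM fun I hI => ?_
  obtain ⟨haar_ne, x_ne⟩ := smul_ne_zero_iff.1 hI
  exact hc I I.2 (by_contra fun ht => haar_ne (haar_eq_zero ht)) x_ne

lemma norm_le_sqFn {I : DyadicI} (hI : I ∈ s) (x : DyadicI → X) (ht : t ∈ toSet I) :
    ‖x I‖ ≤ sqFn s x t := by
  have haar_term := norm_le_rademacherNorm (fun I : {I // I ∈ s} => haar I.1 t • x I.1) ⟨I, hI⟩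
  rwa [norm_smul, Real.norm_eq_abs, abs_haar_of_mem ht, one_mul,
    ← sqFn_eq_rademacherNorm] at haar_term

lemma toSet_subset_support_sqFn {I : DyadicI} (hI : I ∈ s) (hx : x I ≠ 0) :
    toSet I ⊆ Function.support (sqFn s x) := fun _ ht =>
  ((norm_pos_iff.2 hx).trans_le (norm_le_sqFn hI x ht)).ne'

lemma sqFn_le_sum_norm (s : Finset DyadicI) (x : DyadicI → X) (t : ℝ) :
    sqFn s x t ≤ ∑ I ∈ s, ‖x I‖ := by
  rw [sqFn_eq_rademacherNorm, ← s.sum_coe_sort fun I => ‖x I‖]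
  refine (rademacherNorm_le_sum_norm _).trans (Finset.sum_le_sum fun I _ => ?_)
  rw [norm_smul, Real.norm_eq_abs]
  refine mul_le_of_le_one_left (norm_nonneg _) ?_
  by_cases ht : t ∈ toSet I.1
  · exact (abs_haar_of_mem ht).le
  · simp [haar_eq_zero ht]

end SquareFunction

section HardyNorm

variable {X : Type*} [NormedAddCommGroup X] [NormedSpace ℝ X]
  {s : Finset DyadicI} {x : DyadicI → X} {p : ℝ}

lemma integrableOn_sqFn_rpow (hp : 0 ≤ p) (s : Finset DyadicI) (x : DyadicI → X) :
    IntegrableOn (fun t => sqFn s x t ^ p) (Icc 0 1) := by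
  refine Measure.integrableOn_of_bounded (M := (∑ I ∈ s, ‖x I‖) ^ p) measure_Icc_lt_top.ne
    ((measurable_sqFn s x).pow_const p).aestronglyMeasurable (ae_of_all _ fun t => ?_)
  rw [Real.norm_of_nonneg (Real.rpow_nonneg (sqFn_nonneg s x t) p)]
  exact Real.rpow_le_rpow (sqFn_nonneg s x t) (sqFn_le_sum_norm s x t) hp

lemma ofReal_HpNormV (hp : 0 ≤ p) (s : Finset DyadicI) (x : DyadicI → X) :
    ENNReal.ofReal (HpNormV p s x) =
      (∫⁻ t in Icc (0 : ℝ) 1, ENNReal.ofReal (sqFn s x t) ^ p) ^ (1 / p) := by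
  have rpow_nonneg (t : ℝ) : 0 ≤ sqFn s x t ^ p := Real.rpow_nonneg (sqFn_nonneg s x t) p
  rw [HpNormV, ← ENNReal.ofReal_rpow_of_nonneg (integral_nonneg rpow_nonneg) (by positivity),
    ofReal_integral_eq_lintegral_ofReal (integrableOn_sqFn_rpow hp s x) (ae_of_all _ rpow_nonneg)]
  simp only [ENNReal.ofReal_rpow_of_nonneg (sqFn_nonneg s x _) hp]

lemma HpNormV_const_smul (hp : p ≠ 0) (a : ℝ) (s : Finset DyadicI) (x : DyadicI → X) :
    HpNormV p s (fun I => a • x I) = |a| * HpNormV p s x := by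
  simp only [HpNormV, sqFn_const_smul, Real.mul_rpow (abs_nonneg a) (sqFn_nonneg s x _),
    integral_const_mul]
  rw [Real.mul_rpow (by positivity)
      (integral_nonneg fun t => Real.rpow_nonneg (sqFn_nonneg s x t) p),
    ← Real.rpow_mul (abs_nonneg a), mul_one_div_cancel hp, Real.rpow_one]

lemma HpNormV_le_of_support_subset (hp : 0 < p) {I : DyadicI} {A : ℝ}
    (hsupp : Function.support (sqFn s x) ⊆ toSet I) (hA : ∀ t, sqFn s x t ≤ A) :
    HpNormV p s x ≤ A * len I ^ (1 / p) := by
  have A_nonneg : 0 ≤ A := (sqFn_nonneg s x 0).trans (hA 0)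
  have rpow_nonneg (t : ℝ) : 0 ≤ sqFn s x t ^ p := Real.rpow_nonneg (sqFn_nonneg s x t) p
  have integral_le : ∫ t in Icc (0 : ℝ) 1, sqFn s x t ^ p ≤ A ^ p * len I := by
    rw [setIntegral_eq_of_subset_of_forall_sdiff_eq_zero measurableSet_Icc (toSet_subset_Icc I)
      fun t ht => by rw [Function.notMem_support.1 (mt (@hsupp t) ht.2), Real.zero_rpow hp.ne']]
    have norm_le := norm_setIntegral_le_of_norm_le_const (μ := volume) (s := toSet I) (C := A ^ p)
      (f := fun t => sqFn s x t ^ p) (by simp [volume_toSet]) fun t _ => by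
        rw [Real.norm_of_nonneg (rpow_nonneg t)]
        exact Real.rpow_le_rpow (sqFn_nonneg s x t) (hA t) hp.le
    rw [measureReal_def, volume_toSet, ENNReal.toReal_ofReal (len_pos I).le] at norm_le
    exact (Real.le_norm_self _).trans norm_le
  calc HpNormV p s x ≤ (A ^ p * len I) ^ (1 / p) :=
        Real.rpow_le_rpow (integral_nonneg rpow_nonneg) integral_le (by positivity)
    _ = A * len I ^ (1 / p) := by
        rw [Real.mul_rpow (by positivity) (len_pos I).le, ← Real.rpow_mul A_nonneg,
          mul_one_div_cancel hp.ne', Real.rpow_one]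

lemma HpNormV_le_of_atom (hp : 0 < p) {q : ℝ} {I : DyadicI}
    (hsupp : Function.support (sqFn s x) ⊆ toSet I)
    (hatom : ∀ t, sqFn s x t ≤ len I ^ (-(1 / q))) :
    HpNormV p s x ≤ len I ^ (1 / p - 1 / q) := by
  rw [sub_eq_neg_add, Real.rpow_add (len_pos I)]
  exact HpNormV_le_of_support_subset hp hsupp hatom

end HardyNorm

section Rearrangement

variable {X : Type*} [NormedAddCommGroup X] [NormedSpace ℝ X]
  {τ : DyadicI → DyadicI} {p q : ℝ}

lemma rearrCoef_const_smul (τ : DyadicI → DyadicI) (p a : ℝ) (s : Finset DyadicI)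
    (x : DyadicI → X) :
    rearrCoef τ p s (fun I => a • x I) = fun J => a • rearrCoef τ p s x J := by
  ext J
  simp only [rearrCoef, Finset.smul_sum, smul_ite, smul_zero, smul_comm a]

lemma rearrCoef_eq_smul_rearrCoef (hτ : Function.Injective τ) (p q : ℝ) (s : Finset DyadicI)
    (x : DyadicI → X) :
    rearrCoef τ q s x = fun J =>
      (len (Function.invFun τ J) / len J) ^ (1 / q - 1 / p) • rearrCoef τ p s x J := by
  ext J
  simp only [rearrCoef, Finset.smul_sum]
  refine Finset.sum_congr rfl fun I _ => ?_
  split_ifs with hIJ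
  · subst hIJ
    rw [Function.leftInverse_invFun hτ I, smul_smul,
      ← Real.rpow_add (div_pos (len_pos I) (len_pos (τ I))), sub_add_cancel]
  · rw [smul_zero]

lemma exists_of_rearrCoef_ne_zero {s : Finset DyadicI} {x : DyadicI → X} {J : DyadicI}
    (hJ : rearrCoef τ p s x J ≠ 0) : ∃ I ∈ s, x I ≠ 0 ∧ τ I = J := by
  obtain ⟨I, hI, term_ne⟩ := Finset.exists_ne_zero_of_sum_ne_zero hJ
  obtain ⟨hIJ, smul_ne⟩ := ite_ne_right_iff.1 term_ne
  exact ⟨I, hI, (smul_ne_zero_iff.1 smul_ne).2, hIJ⟩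

lemma ofReal_HpNormV_rearrCoef_le_hpOpNorm_mul (hp : p ≠ 0) (τ : DyadicI → DyadicI)
    {s : Finset DyadicI} {x : DyadicI → X} {r : ℝ} (hr : 0 < r) (hx : HpNormV p s x ≤ r) :
    ENNReal.ofReal (HpNormV p (s.image τ) (rearrCoef τ p s x)) ≤
      hpOpNorm τ p X * ENNReal.ofReal r := by
  have normalized_le : HpNormV p s (fun I => r⁻¹ • x I) ≤ 1 := by
    rw [HpNormV_const_smul hp, abs_of_pos (inv_pos.2 hr), inv_mul_le_iff₀ hr, mul_one]
    exact hx
  have le_opNorm : ENNReal.ofReal (HpNormV p (s.image τ) (rearrCoef τ p s fun I => r⁻¹ • x I)) ≤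
      hpOpNorm τ p X :=
    le_iSup_of_le s (le_iSup_of_le _ (le_iSup_of_le normalized_le le_rfl))
  rw [rearrCoef_const_smul, HpNormV_const_smul hp, abs_of_pos (inv_pos.2 hr),
    ENNReal.ofReal_mul (inv_nonneg.2 hr.le), ENNReal.ofReal_inv_of_pos hr, mul_comm,
    ← div_eq_mul_inv] at le_opNorm
  exact (ENNReal.div_le_iff (ENNReal.ofReal_pos.2 hr).ne' ENNReal.ofReal_ne_top).1 le_opNorm

/-- The Haar support of `f = ∑_{I ∈ s} x_I h_I`: the intervals of `s` with nonzero coefficient. -/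
def haarSupport (s : Finset DyadicI) (x : DyadicI → X) : Finset DyadicI := {I ∈ s | x I ≠ 0}

theorem sqFn_rearrCoef_le (hτ : Function.Injective τ) (hpq : 1 / p ≤ 1 / q) (s : Finset DyadicI)
    (x : DyadicI → X) (t : ℝ) :
    sqFn (s.image τ) (rearrCoef τ q s x) t ≤
      muFin τ (haarSupport s x) t ^ (1 / q - 1 / p) *
        sqFn (s.image τ) (rearrCoef τ p s x) t := by
  rw [rearrCoef_eq_smul_rearrCoef hτ p q]
  refine sqFn_smul_le (Real.rpow_nonneg (muFin_nonneg _ _ _) _) fun J _ ht hJ => ?_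
  obtain ⟨I, hI, hxI, rfl⟩ := exists_of_rearrCoef_ne_zero hJ
  have ratio_nonneg : 0 ≤ len I / len (τ I) := (div_pos (len_pos I) (len_pos (τ I))).le
  rw [Function.leftInverse_invFun hτ I, abs_of_nonneg (Real.rpow_nonneg ratio_nonneg _)]
  exact Real.rpow_le_rpow ratio_nonneg
    (len_div_len_le_muFin τ (Finset.mem_filter.2 ⟨hI, hxI⟩) ht) (sub_nonneg.2 hpq)

theorem ofReal_HpNormV_rearrCoef_le (hτ : Function.Injective τ) (hq : 0 < q) (hqp : q ≤ p)
    (s : Finset DyadicI) (x : DyadicI → X) :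
    ENNReal.ofReal (HpNormV q (s.image τ) (rearrCoef τ q s x)) ≤
      (∫⁻ t in Icc (0 : ℝ) 1, muSet τ (haarSupport s x) t) ^ (1 / q - 1 / p) *
        ENNReal.ofReal (HpNormV p (s.image τ) (rearrCoef τ p s x)) := by
  have hpq : 1 / p ≤ 1 / q := one_div_le_one_div_of_le hq hqp
  rw [ofReal_HpNormV hq.le, ofReal_HpNormV (hq.le.trans hqp)]
  refine lintegral_rpow_le_of_le_rpow_mul (measurable_muSet τ _).aemeasurable
    (measurable_sqFn _ _).ennreal_ofReal.aemeasurable hq hqp (ae_of_all _ fun t => ?_)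
  have mu_nonneg := muFin_nonneg τ (haarSupport s x) t
  rw [muSet_coe_finset, ENNReal.ofReal_rpow_of_nonneg mu_nonneg (sub_nonneg.2 hpq),
    ← ENNReal.ofReal_mul (Real.rpow_nonneg mu_nonneg _)]
  exact ENNReal.ofReal_le_ofReal (sqFn_rearrCoef_le hτ hpq s x t)

lemma pointSet_haarSupport_subset (s : Finset DyadicI) (x : DyadicI → X) :
    pointSet (haarSupport s x) ⊆ Function.support (sqFn s x) :=
  iUnion₂_subset fun _ hI =>
    toSet_subset_support_sqFn (Finset.mem_filter.1 hI).1 (Finset.mem_filter.1 hI).2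

lemma lintegral_muSet_haarSupport_le (τ : DyadicI → DyadicI) {s : Finset DyadicI}
    {x : DyadicI → X} {I : DyadicI} (hsupp : Function.support (sqFn s x) ⊆ toSet I) :
    ∫⁻ t in Icc (0 : ℝ) 1, muSet τ (haarSupport s x) t ≤ Cone τ * ENNReal.ofReal (len I) := by
  refine (lintegral_muSet_le τ _).trans ?_
  rw [← volume_toSet]
  gcongr
  exact (pointSet_haarSupport_subset s x).trans hsupp

end Rearrangement

theorem statement9_general {p q : ℝ} (hq : 0 < q) (hqp : q ≤ p)
    {X : Type*} [NormedAddCommGroup X] [NormedSpace ℝ X]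
    {τ : DyadicI → DyadicI} (hτ : Function.Injective τ)
    {s : Finset DyadicI} {x : DyadicI → X} {I₀ : DyadicI}
    (hsupp : Function.support (sqFn s x) ⊆ toSet I₀)
    (hatom : ∀ t : ℝ, sqFn s x t ≤ len I₀ ^ (-(1 / q))) :
    ENNReal.ofReal (HpNormV q (s.image τ) (rearrCoef τ q s x)) ≤
      Cone τ ^ (1 / q - 1 / p) * hpOpNorm τ p X := by
  have hp : 0 < p := hq.trans_le hqp
  have exponent_nonneg : 0 ≤ 1 / q - 1 / p := sub_nonneg.2 (one_div_le_one_div_of_le hq hqp)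
  have len_cancel :
      ENNReal.ofReal (len I₀) ^ (1 / q - 1 / p) * ENNReal.ofReal (len I₀ ^ (1 / p - 1 / q)) =
        1 := by
    rw [ENNReal.ofReal_rpow_of_pos (len_pos I₀), ← ENNReal.ofReal_mul (Real.rpow_nonneg
      (len_pos I₀).le _), ← Real.rpow_add (len_pos I₀), sub_add_sub_cancel', sub_self,
      Real.rpow_zero, ENNReal.ofReal_one]
  calc ENNReal.ofReal (HpNormV q (s.image τ) (rearrCoef τ q s x))
      ≤ (∫⁻ t in Icc (0 : ℝ) 1, muSet τ (haarSupport s x) t) ^ (1 / q - 1 / p) *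
          ENNReal.ofReal (HpNormV p (s.image τ) (rearrCoef τ p s x)) :=
        ofReal_HpNormV_rearrCoef_le hτ hq hqp s x
    _ ≤ (Cone τ * ENNReal.ofReal (len I₀)) ^ (1 / q - 1 / p) *
          (hpOpNorm τ p X * ENNReal.ofReal (len I₀ ^ (1 / p - 1 / q))) := by
        gcongr
        · exact lintegral_muSet_haarSupport_le τ hsupp
        · exact ofReal_HpNormV_rearrCoef_le_hpOpNorm_mul hp.ne' τ
            (Real.rpow_pos_of_pos (len_pos I₀) _) (HpNormV_le_of_atom hp hsupp hatom)
    _ = Cone τ ^ (1 / q - 1 / p) * hpOpNorm τ p X := by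
        rw [ENNReal.mul_rpow_of_nonneg _ _ exponent_nonneg, mul_mul_mul_comm, len_cancel, mul_one]

/-- Let `0 < q ≤ p ≤ 2`, `X` a Banach space, `τ : D → D` injective,
and let `f = ∑_J x_J h_J` be a finitely supported dyadic `H^q_X` atom: there is
`I₀ ∈ D` with `supp 𝕊(f) ⊆ I₀` and `𝕊(f) ≤ |I₀|^{-1/q}` everywhere. Then
`‖(T_{τ,q} ⊗ Id_X)(f)‖_{H^q_X} ≤ C₁^{1/q - 1/p} · ‖T_{τ,p} ⊗ Id_X‖_p` in `[0,∞]`. -/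
theorem statement9 (p q : ℝ) (hq : 0 < q) (hqp : q ≤ p) (hp : p ≤ 2)
    (X : Type*) [NormedAddCommGroup X] [NormedSpace ℝ X] [CompleteSpace X]
    (τ : DyadicI → DyadicI) (hτ : Function.Injective τ)
    (s : Finset DyadicI) (x : DyadicI → X) (I₀ : DyadicI)
    (hsupp : Function.support (sqFn s x) ⊆ DyadicI.toSet I₀)
    (hatom : ∀ t : ℝ, sqFn s x t ≤ DyadicI.len I₀ ^ (-(1 / q))) :
    ENNReal.ofReal (HpNormV q (s.image τ) (rearrCoef τ q s x)) ≤
      Cone τ ^ (1 / q - 1 / p) * hpOpNorm τ p X :=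
  statement9_general hq hqp hτ hsupp hatom
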